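/- Let ξ be a probability vector of dimension k that has at least two distinct strictly positive entries (i.e., a nonuniform distribution of nonzero Schmidt coefficients). Then there exist probability vectors x, y of dimension 4 such that ¬(x ≺ y) but x⊗ξ ≺ y⊗ξ. In other words, every such ξ is a potential catalyst. -/

import Mathlib

/-- The sum of the `k` largest entries of a vector (equivalently, for vectors with
nonnegative entries, the maximum of `∑ i ∈ s, x i` over subsets `s` of cardinality at
most `k`; this also accounts for padding with zeros). -/
noncomputable def topSum {ι : Type*} [Fintype ι] [DecidableEq ι] (x : ι → ℝ) (k : ℕ) : ℝ :=
  ((Finset.univ : Finset ι).powerset.filter (fun s => s.card ≤ k)).sup'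
    ⟨∅, by simp⟩ (fun s => ∑ i ∈ s, x i)

/-- A probability vector: nonnegative entries summing to 1. -/
def IsProbVec {ι : Type*} [Fintype ι] (x : ι → ℝ) : Prop :=
  (∀ i, 0 ≤ x i) ∧ ∑ i, x i = 1

/-- `x ≺ y` (majorization, after padding with zeros to a common dimension): every partial
sum of the `k` largest entries of `x` is at most that of `y`, with equal total sums. -/
def PMaj {ι κ : Type*} [Fintype ι] [DecidableEq ι] [Fintype κ] [DecidableEq κ]
    (x : ι → ℝ) (y : κ → ℝ) : Prop :=
  (∀ k : ℕ, topSum x k ≤ topSum y k) ∧ (∑ i, x i = ∑ j, y j)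

/-- Tensor product of two vectors: `(x ⊗ y)_{(i,j)} = x_i y_j`. -/
def pvTensor {ι κ : Type*} (x : ι → ℝ) (y : κ → ℝ) : ι × κ → ℝ :=
  fun p => x p.1 * y p.2

/-!
Majorization is dual to the hinge sums `H_x(t) = ∑ (xᵢ - t)⁺`: `x ≺ y` means equal totals and
`H_x ≤ H_y` on `[0, ∞)`, and `H_{x ⊗ c}(t) = ∑ cₗ H_x(t / cₗ)`. For `M > 1`, take
`x = ((M + 1) / 2, (M + 1) / 2, 1 / 2, 1 / 2)` and `y₀ = (M, 1, 1, 0)`: on `(0, M)` we have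
`H_x < H_{y₀}` except at `t = 1`, where the two agree. Since `t / cₗ = 1` cannot hold for two
distinct entries of `c` at once, for large `M` the inequality `H_{x ⊗ c} < H_{y₀ ⊗ c}` is strict on
a compact interval containing every `t` with some `t / cₗ` near `1`, hence holds with a margin.
Replacing `y₀` by `(M - ε, 1, 1, ε)` breaks `x ≺ y` at `t = 1`, costs at most `ε ∑ cₗ` of that
margin, and is harmless outside the interval.
-/

open Finset
open scoped Topology

theorem exists_card_eq_forall_notMem_le {ι α : Type*} [Fintype ι] [LinearOrder α] (x : ι → α)
    {k : ℕ} (hk : k ≤ Fintype.card ι) :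
    ∃ s : Finset ι, #s = k ∧ ∀ i ∈ s, ∀ j ∉ s, x j ≤ x i := by
  classical
  induction k with
  | zero => exact ⟨∅, by simp⟩
  | succ k ih =>
    obtain ⟨s, hs, hmax⟩ := ih (by lia)
    have hne : sᶜ.Nonempty := by
      rw [← card_pos, card_compl]
      lia
    obtain ⟨m, hm, hm'⟩ := exists_max_image sᶜ x hne
    rw [mem_compl] at hm
    refine ⟨insert m s, by rw [card_insert_of_notMem hm, hs], fun i hi j hj => ?_⟩
    rw [mem_insert, not_or] at hj
    rcases mem_insert.1 hi with rfl | hi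
    · exact hm' j (mem_compl.2 hj.2)
    · exact hmax i hi j hj.2

theorem exists_pos_forall_pos_imp_le {ι : Type*} [Finite ι] (c : ι → ℝ) :
    ∃ a, 0 < a ∧ ∀ l, 0 < c l → a ≤ c l := by
  have h : ∀ᶠ a in 𝓝[>] (0 : ℝ), ∀ l, 0 < c l → a ≤ c l :=
    Filter.eventually_all.2 fun l => Filter.eventually_imp_distrib_left.2 fun hl =>
      nhdsWithin_le_nhds (eventually_le_nhds hl)
  exact (eventually_mem_nhdsWithin.and h).exists

section HingeSum

variable {ι κ : Type*} [Fintype ι] [Fintype κ]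

/-- The hinge sum `∑ (xᵢ - t)⁺`, the convex dual of the partial sums `topSum x k` in the
length `k`. -/
noncomputable def hingeSum (x : ι → ℝ) (t : ℝ) : ℝ :=
  ∑ i, max (x i - t) 0

theorem continuous_hingeSum (x : ι → ℝ) : Continuous (hingeSum x) := by
  unfold hingeSum
  fun_prop

theorem hingeSum_smul (x : ι → ℝ) {a t : ℝ} (ha : 0 ≤ a) (ht : 0 ≤ t) :
    hingeSum (a • x) t = a * hingeSum x (t / a) := by
  rcases ha.eq_or_lt with rfl | ha
  · simp [hingeSum, ht]
  · simp only [hingeSum, mul_sum, mul_max_of_nonneg _ _ ha.le, mul_sub, mul_div_cancel₀ t ha.ne',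
      mul_zero, Pi.smul_apply, smul_eq_mul]

theorem hingeSum_eq_sum_sub_card_mul {x : ι → ℝ} {t : ℝ} {s : Finset ι}
    (hs : ∀ i ∈ s, t ≤ x i) (hs' : ∀ i ∉ s, x i ≤ t) :
    hingeSum x t = ∑ i ∈ s, x i - #s * t := by
  rw [hingeSum, ← sum_subset s.subset_univ fun i _ hi => max_eq_right (sub_nonpos.2 (hs' i hi)),
    sum_congr rfl fun i hi => max_eq_left (sub_nonneg.2 (hs i hi)), sum_sub_distrib, sum_const,
    nsmul_eq_mul]

variable [DecidableEq ι] [DecidableEq κ]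

theorem sum_le_topSum (x : ι → ℝ) {k : ℕ} {s : Finset ι} (hs : #s ≤ k) :
    ∑ i ∈ s, x i ≤ topSum x k :=
  le_sup' (fun s => ∑ i ∈ s, x i) (by simpa using hs)

theorem topSum_le_mul_add_hingeSum (x : ι → ℝ) (k : ℕ) {t : ℝ} (ht : 0 ≤ t) :
    topSum x k ≤ k * t + hingeSum x t := by
  refine sup'_le _ _ fun s hs => ?_
  have hs' : #s ≤ k := (mem_filter.1 hs).2
  calc ∑ i ∈ s, x i ≤ ∑ i ∈ s, (t + max (x i - t) 0) :=
        sum_le_sum fun i _ => by linarith [le_max_left (x i - t) 0]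
    _ = #s * t + ∑ i ∈ s, max (x i - t) 0 := by
        rw [sum_add_distrib, sum_const, nsmul_eq_mul]
    _ ≤ k * t + hingeSum x t := by
        unfold hingeSum
        gcongr
        exact s.subset_univ

theorem exists_nat_mul_add_hingeSum_le_topSum (x : ι → ℝ) (t : ℝ) :
    ∃ k : ℕ, k * t + hingeSum x t ≤ topSum x k := by
  have hinge := hingeSum_eq_sum_sub_card_mul (x := x) (t := t) (s := {i | t < x i})
    (fun i hi => (mem_filter_univ i).1 hi |>.le) (fun i hi => by simpa using hi)
  exact ⟨_, by linarith [sum_le_topSum x (s := {i | t < x i}) le_rfl]⟩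

theorem exists_nonneg_mul_add_hingeSum_le_topSum (x : ι → ℝ) (k : ℕ) :
    ∃ t, 0 ≤ t ∧ k * t + hingeSum x t ≤ topSum x k := by
  rcases le_or_gt #{i | 0 < x i} k with hk | hk
  · have hinge := hingeSum_eq_sum_sub_card_mul (x := x) (t := 0) (s := {i | 0 < x i})
      (fun i hi => (mem_filter_univ i).1 hi |>.le) (fun i hi => by simpa using hi)
    exact ⟨0, le_rfl, by linarith [sum_le_topSum x hk]⟩
  · obtain ⟨s, hs, htop⟩ := exists_card_eq_forall_notMem_le x (hk.le.trans (card_le_univ _))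
    obtain ⟨p, hp, hps⟩ := exists_mem_notMem_of_card_lt_card (hs.trans_lt hk)
    obtain ⟨m, hm, hmax⟩ := exists_max_image sᶜ x ⟨p, mem_compl.2 hps⟩
    have hpm : 0 < x m := ((mem_filter_univ p).1 hp).trans_le (hmax p (mem_compl.2 hps))
    have hinge := hingeSum_eq_sum_sub_card_mul (fun i hi => htop i hi m (mem_compl.1 hm))
      (fun i hi => hmax i (mem_compl.2 hi))
    rw [hs] at hinge
    exact ⟨x m, hpm.le, by linarith [sum_le_topSum x hs.le]⟩

theorem pMaj_iff_forall_hingeSum_le {x : ι → ℝ} {y : κ → ℝ} :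
    PMaj x y ↔ (∀ t, 0 ≤ t → hingeSum x t ≤ hingeSum y t) ∧ ∑ i, x i = ∑ j, y j := by
  refine and_congr_left fun _ => ⟨fun h t ht => ?_, fun h k => ?_⟩
  · obtain ⟨k, hk⟩ := exists_nat_mul_add_hingeSum_le_topSum x t
    linarith [h k, topSum_le_mul_add_hingeSum y k ht]
  · obtain ⟨t, ht, hyt⟩ := exists_nonneg_mul_add_hingeSum_le_topSum y k
    linarith [h t ht, topSum_le_mul_add_hingeSum x k ht]

theorem PMaj.smul {x : ι → ℝ} {y : κ → ℝ} (h : PMaj x y) {a : ℝ} (ha : 0 ≤ a) :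
    PMaj (a • x) (a • y) := by
  rw [pMaj_iff_forall_hingeSum_le] at h ⊢
  refine ⟨fun t ht => ?_, by simp only [Pi.smul_apply, ← smul_sum, h.2]⟩
  rw [hingeSum_smul x ha ht, hingeSum_smul y ha ht]
  exact mul_le_mul_of_nonneg_left (h.1 _ (by positivity)) ha

theorem pMaj_smul_iff {x : ι → ℝ} {y : κ → ℝ} {a : ℝ} (ha : 0 < a) :
    PMaj (a • x) (a • y) ↔ PMaj x y :=
  ⟨fun h => by simpa only [inv_smul_smul₀ ha.ne'] using h.smul (inv_nonneg.2 ha.le),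
    fun h => h.smul ha.le⟩

end HingeSum

section Tensor

variable {ι κ : Type*}

theorem pvTensor_smul_left (a : ℝ) (x : ι → ℝ) (c : κ → ℝ) :
    pvTensor (a • x) c = a • pvTensor x c :=
  funext fun _ => mul_assoc _ _ _

variable [Fintype ι] [Fintype κ]

theorem sum_pvTensor (x : ι → ℝ) (c : κ → ℝ) :
    ∑ p, pvTensor x c p = (∑ i, x i) * ∑ l, c l := by
  simp only [pvTensor, Fintype.sum_prod_type, sum_mul_sum]

-- An entry `c l = 0` contributes `0` on both sides, whatever the junk value `t / 0`.
theorem hingeSum_pvTensor (x : ι → ℝ) {c : κ → ℝ} (hc : ∀ l, 0 ≤ c l) {t : ℝ} (ht : 0 ≤ t) :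
    hingeSum (pvTensor x c) t = ∑ l, c l * hingeSum x (t / c l) := by
  rw [hingeSum, Fintype.sum_prod_type_right]
  refine sum_congr rfl fun l _ => ?_
  rw [← hingeSum_smul x (hc l) ht]
  simp only [hingeSum, pvTensor, Pi.smul_apply, smul_eq_mul, mul_comm]

end Tensor

theorem isProbVec_inv_smul {ι : Type*} [Fintype ι] {x : ι → ℝ} {S : ℝ} (hx : ∀ i, 0 ≤ x i)
    (hsum : ∑ i, x i = S) (hS : 0 < S) : IsProbVec (S⁻¹ • x) :=
  ⟨fun i => mul_nonneg (inv_nonneg.2 hS.le) (hx i), by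
    simp only [Pi.smul_apply, smul_eq_mul, ← mul_sum, hsum, inv_mul_cancel₀ hS.ne']⟩

section Witnesses

/-- The source vector of the transformation, not normalized: its entries sum to `M + 2`. -/
noncomputable def sourceVec (M : ℝ) : Fin 4 → ℝ :=
  ![(M + 1) / 2, (M + 1) / 2, 1 / 2, 1 / 2]

/-- The target vector of the transformation, not normalized: its entries sum to `M + 2`. For
`1 ≤ M` and `ε = 0` it majorizes `sourceVec M`, with a tie in the partial sums of length two. -/
def targetVec (M ε : ℝ) : Fin 4 → ℝ :=
  ![M - ε, 1, 1, ε]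

variable {M ε t : ℝ}

theorem sourceVec_nonneg (hM : 0 ≤ M) (i : Fin 4) : 0 ≤ sourceVec M i := by
  have : 0 ≤ (M + 1) / 2 := by positivity
  fin_cases i <;> simp [sourceVec, this]

theorem targetVec_nonneg (hε : 0 ≤ ε) (hεM : ε ≤ M) (i : Fin 4) : 0 ≤ targetVec M ε i := by
  fin_cases i <;> simp [targetVec, hε, hεM]

theorem sum_sourceVec (M : ℝ) : ∑ i, sourceVec M i = M + 2 := by
  simp only [sourceVec, Fin.sum_univ_four, Matrix.cons_val]
  ring

theorem sum_targetVec (M ε : ℝ) : ∑ i, targetVec M ε i = M + 2 := by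
  simp only [targetVec, Fin.sum_univ_four, Matrix.cons_val]
  ring

theorem hingeSum_sourceVec (M t : ℝ) :
    hingeSum (sourceVec M) t = 2 * max ((M + 1) / 2 - t) 0 + 2 * max (1 / 2 - t) 0 := by
  simp only [hingeSum, sourceVec, Fin.sum_univ_four, Matrix.cons_val]
  ring

theorem hingeSum_targetVec (M ε t : ℝ) :
    hingeSum (targetVec M ε) t = max (M - ε - t) 0 + 2 * max (1 - t) 0 + max (ε - t) 0 := by
  simp only [hingeSum, targetVec, Fin.sum_univ_four, Matrix.cons_val]
  ring

theorem hingeSum_sourceVec_lt_targetVec_zero (ht : 0 < t) (htM : t < M) (ht1 : t ≠ 1) :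
    hingeSum (sourceVec M) t < hingeSum (targetVec M 0) t := by
  rw [hingeSum_sourceVec, hingeSum_targetVec]
  have hM := le_max_left (M - 0 - t) 0
  have hzero := le_max_right (0 - t) 0
  rcases ht1.lt_or_gt with ht1 | ht1
  · have hhalf : max (1 / 2 - t) 0 < (1 - t) / 2 := max_lt (by linarith) (by linarith)
    have hmean : max ((M + 1) / 2 - t) 0 = (M + 1) / 2 - t := max_eq_left (by linarith)
    linarith [le_max_left (1 - t) 0]
  · have hhalf : max (1 / 2 - t) 0 = 0 := max_eq_right (by linarith)
    have hmean : max ((M + 1) / 2 - t) 0 < (M - t) / 2 := max_lt (by linarith) (by linarith)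
    linarith [le_max_right (1 - t) 0]

theorem hingeSum_sourceVec_one (hM : 1 ≤ M) : hingeSum (sourceVec M) 1 = M - 1 := by
  rw [hingeSum_sourceVec, max_eq_left (by linarith), max_eq_right (by norm_num)]
  ring

theorem hingeSum_targetVec_one (hε : ε ≤ 1) : hingeSum (targetVec M ε) 1 = max (M - ε - 1) 0 := by
  rw [hingeSum_targetVec, sub_self, max_self, max_eq_right (sub_nonpos.2 hε)]
  ring

theorem hingeSum_sourceVec_le_targetVec_zero (ht : 0 < t) (htM : t < M) :
    hingeSum (sourceVec M) t ≤ hingeSum (targetVec M 0) t := by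
  rcases eq_or_ne t 1 with rfl | ht1
  · rw [hingeSum_sourceVec_one htM.le, hingeSum_targetVec_one zero_le_one, sub_zero]
    exact le_max_left _ _
  · exact (hingeSum_sourceVec_lt_targetVec_zero ht htM ht1).le

theorem hingeSum_targetVec_zero_le_add (hε : 0 ≤ ε) :
    hingeSum (targetVec M 0) t ≤ hingeSum (targetVec M ε) t + ε := by
  have hM : max (M - 0 - t) 0 ≤ max (M - ε - t) 0 + ε :=
    max_le (by linarith [le_max_left (M - ε - t) 0]) (by positivity)
  have hzero : max (0 - t) 0 ≤ max (ε - t) 0 := by gcongr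
  rw [hingeSum_targetVec, hingeSum_targetVec]
  linarith

theorem hingeSum_sourceVec_le_targetVec_of_le_half (hM : 0 ≤ M) (ht : t ≤ 1 / 2) :
    hingeSum (sourceVec M) t ≤ hingeSum (targetVec M ε) t := by
  rw [hingeSum_sourceVec, hingeSum_targetVec, max_eq_left (by linarith), max_eq_left (by linarith)]
  linarith [le_max_left (M - ε - t) 0, le_max_left (1 - t) 0, le_max_left (ε - t) 0]

theorem hingeSum_sourceVec_le_targetVec_of_two_le (hε : ε ≤ 1) (ht : 2 ≤ t) :
    hingeSum (sourceVec M) t ≤ hingeSum (targetVec M ε) t := by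
  have hmean : max ((M + 1) / 2 - t) 0 ≤ max (M - ε - t) 0 / 2 :=
    max_le (by linarith [le_max_left (M - ε - t) 0]) (by positivity)
  have hhalf : max (1 / 2 - t) 0 = 0 := max_eq_right (by linarith)
  rw [hingeSum_sourceVec, hingeSum_targetVec]
  linarith [le_max_right (1 - t) 0, le_max_right (ε - t) 0]

theorem not_pMaj_sourceVec_targetVec (hM : 1 < M) (hε : 0 < ε) (hε1 : ε ≤ 1) :
    ¬ PMaj (sourceVec M) (targetVec M ε) := by
  intro h
  have hone := (pMaj_iff_forall_hingeSum_le.1 h).1 1 zero_le_one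
  rw [hingeSum_sourceVec_one hM.le, hingeSum_targetVec_one hε1] at hone
  exact hone.not_gt (max_lt (by linarith) (by linarith))

end Witnesses

section Catalysis

variable {ι : Type*} [Fintype ι] {c : ι → ℝ} {a b M ε t : ℝ}

theorem hingeSum_pvTensor_sourceVec_lt_targetVec_zero (hc : ∀ l, 0 ≤ c l) {i j : ι}
    (hi : 0 < c i) (hj : 0 < c j) (hij : c i ≠ c j) (ht : 0 < t)
    (htM : ∀ l, 0 < c l → t / c l < M) :
    hingeSum (pvTensor (sourceVec M) c) t < hingeSum (pvTensor (targetVec M 0) c) t := by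
  rw [hingeSum_pvTensor _ hc ht.le, hingeSum_pvTensor _ hc ht.le]
  have hstrict (l : ι) (hl : 0 < c l) (hlt : t / c l ≠ 1) :
      c l * hingeSum (sourceVec M) (t / c l) < c l * hingeSum (targetVec M 0) (t / c l) :=
    mul_lt_mul_of_pos_left
      (hingeSum_sourceVec_lt_targetVec_zero (div_pos ht hl) (htM l hl) hlt) hl
  refine sum_lt_sum (fun l _ => ?_) ?_
  · rcases (hc l).eq_or_lt with hl | hl
    · simp only [← hl, zero_mul, le_refl]
    · exact mul_le_mul_of_nonneg_left
        (hingeSum_sourceVec_le_targetVec_zero (div_pos ht hl) (htM l hl)) hl.le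
  · by_cases hti : t / c i = 1
    · have htj : t / c j ≠ 1 := fun htj =>
        hij (((div_eq_one_iff_eq hi.ne').1 hti).symm.trans ((div_eq_one_iff_eq hj.ne').1 htj))
      exact ⟨j, mem_univ j, hstrict j hj htj⟩
    · exact ⟨i, mem_univ i, hstrict i hi hti⟩

theorem hingeSum_pvTensor_targetVec_zero_le_add (hc : ∀ l, 0 ≤ c l) (hε : 0 ≤ ε) (ht : 0 ≤ t) :
    hingeSum (pvTensor (targetVec M 0) c) t ≤
      hingeSum (pvTensor (targetVec M ε) c) t + ε * ∑ l, c l := by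
  rw [hingeSum_pvTensor _ hc ht, hingeSum_pvTensor _ hc ht, mul_sum, ← sum_add_distrib]
  refine sum_le_sum fun l _ => ?_
  rw [mul_comm ε, ← mul_add]
  exact mul_le_mul_of_nonneg_left (hingeSum_targetVec_zero_le_add hε) (hc l)

theorem hingeSum_pvTensor_sourceVec_le_targetVec_of_notMem_Icc (hc : ∀ l, 0 ≤ c l)
    (ha : ∀ l, 0 < c l → a ≤ c l) (hb : ∀ l, c l ≤ b) (hM : 0 ≤ M) (hε : ε ≤ 1) (ht : 0 ≤ t)
    (htab : t ∉ Set.Icc (a / 2) (2 * b)) :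
    hingeSum (pvTensor (sourceVec M) c) t ≤ hingeSum (pvTensor (targetVec M ε) c) t := by
  rw [hingeSum_pvTensor _ hc ht, hingeSum_pvTensor _ hc ht]
  refine sum_le_sum fun l _ => ?_
  rcases (hc l).eq_or_lt with hl | hl
  · simp only [← hl, zero_mul, le_refl]
  · refine mul_le_mul_of_nonneg_left ?_ hl.le
    rcases lt_or_ge t (a / 2) with hta | hta
    · exact hingeSum_sourceVec_le_targetVec_of_le_half hM
        ((div_le_iff₀ hl).2 (by linarith [ha l hl]))
    · have hbt : 2 * b < t := not_le.1 fun htb => htab ⟨hta, htb⟩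
      exact hingeSum_sourceVec_le_targetVec_of_two_le hε
        ((le_div_iff₀ hl).2 (by linarith [hb l]))

theorem exists_pMaj_pvTensor_sourceVec_targetVec [DecidableEq ι] (hc : ∀ l, 0 ≤ c l)
    (h2 : ∃ i j, 0 < c i ∧ 0 < c j ∧ c i ≠ c j) :
    ∃ M ε, 1 < M ∧ 0 < ε ∧ ε ≤ 1 ∧
      PMaj (pvTensor (sourceVec M) c) (pvTensor (targetVec M ε) c) := by
  obtain ⟨i, j, hi, hj, hij⟩ := h2
  obtain ⟨a, ha0, ha⟩ := exists_pos_forall_pos_imp_le c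
  set b := ∑ l, c l
  have hb (l : ι) : c l ≤ b := single_le_sum (fun l _ => hc l) (mem_univ l)
  have hb0 : 0 < b := hi.trans_le (hb i)
  set M := 2 * b / a + 1
  have hM : 1 < M := lt_add_of_pos_left 1 (by positivity)
  have hgap : ∀ t ∈ Set.Icc (a / 2) (2 * b),
      0 < hingeSum (pvTensor (targetVec M 0) c) t - hingeSum (pvTensor (sourceVec M) c) t :=
    fun t ht => sub_pos.2 <|
      hingeSum_pvTensor_sourceVec_lt_targetVec_zero hc hi hj hij (by linarith [ht.1])
        fun l hl => calc
          t / c l ≤ 2 * b / a := div_le_div₀ (by positivity) ht.2 ha0 (ha l hl)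
          _ < M := lt_add_one _
  obtain ⟨m, hm0, hm⟩ := isCompact_Icc.exists_forall_le'
    ((continuous_hingeSum _).sub (continuous_hingeSum _)).continuousOn hgap
  obtain ⟨ε, hε0, hε1, hεb⟩ : ∃ ε, 0 < ε ∧ ε ≤ 1 ∧ ε * b ≤ m :=
    ⟨min 1 (m / b), by positivity, min_le_left _ _, (le_div_iff₀ hb0).1 (min_le_right _ _)⟩
  refine ⟨M, ε, hM, hε0, hε1, pMaj_iff_forall_hingeSum_le.2 ⟨fun t ht => ?_, ?_⟩⟩
  · by_cases htab : t ∈ Set.Icc (a / 2) (2 * b)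
    · have hcost := hingeSum_pvTensor_targetVec_zero_le_add (M := M) hc hε0.le ht
      have hmargin : m ≤ hingeSum (pvTensor (targetVec M 0) c) t -
          hingeSum (pvTensor (sourceVec M) c) t := hm t htab
      linarith
    · exact hingeSum_pvTensor_sourceVec_le_targetVec_of_notMem_Icc hc ha hb (by linarith)
        hε1 ht htab
  · rw [sum_pvTensor, sum_pvTensor, sum_sourceVec, sum_targetVec]

end Catalysis

theorem nonuniform_is_potential_catalyst_general {ι : Type*} [Fintype ι] [DecidableEq ι]
    (c : ι → ℝ) (hc : ∀ l, 0 ≤ c l) (h2 : ∃ i j, 0 < c i ∧ 0 < c j ∧ c i ≠ c j) :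
    ∃ x y : Fin 4 → ℝ, IsProbVec x ∧ IsProbVec y ∧ ¬ PMaj x y ∧
      PMaj (pvTensor x c) (pvTensor y c) := by
  obtain ⟨M, ε, hM, hε, hε1, hmaj⟩ := exists_pMaj_pvTensor_sourceVec_targetVec hc h2
  have hS : 0 < M + 2 := by linarith
  refine ⟨(M + 2)⁻¹ • sourceVec M, (M + 2)⁻¹ • targetVec M ε,
    isProbVec_inv_smul (sourceVec_nonneg (by linarith)) (sum_sourceVec M) hS,
    isProbVec_inv_smul (targetVec_nonneg hε.le (by linarith)) (sum_targetVec M ε) hS, ?_, ?_⟩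
  · rw [pMaj_smul_iff (inv_pos.2 hS)]
    exact not_pMaj_sourceVec_targetVec hM hε hε1
  · rw [pvTensor_smul_left, pvTensor_smul_left]
    exact hmaj.smul (inv_nonneg.2 hS.le)

/-- Daftuar–Klimesh: any probability vector with at least two distinct strictly positive
entries is a potential catalyst, enabling some transformation between incomparable
probability vectors of dimension 4. -/
theorem nonuniform_is_potential_catalyst {k : ℕ} (ξ : Fin k → ℝ) (hξ : IsProbVec ξ)
    (h2 : ∃ i j, 0 < ξ i ∧ 0 < ξ j ∧ ξ i ≠ ξ j) :
    ∃ x y : Fin 4 → ℝ, IsProbVec x ∧ IsProbVec y ∧ ¬ PMaj x y ∧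
      PMaj (pvTensor x ξ) (pvTensor y ξ) :=
  nonuniform_is_potential_catalyst_general ξ hξ.1 h2
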